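/- Let p ≥ 1 be real, K > 0, and let μ : [0,∞) → (0,∞) be nonincreasing with μ(s) ≤ K(1+s)^{−1/p} for all s ≥ 0. Let ω be a linear functional on L∞((0,∞)) which is positive (ω(f) ≥ 0 whenever f ≥ 0 a.e.), satisfies ess liminf_{t → +∞} f(t) ≤ ω(f) ≤ ess limsup_{t → +∞} f(t) for every real-valued f ∈ L∞((0,∞)), and satisfies ω ∘ D_c = ω, ω ∘ P^a = ω and ω ∘ M = ω for all c > 0 and a > 0. Define G(λ) = (1/λ)∫₀^∞ exp(−λ^{−2/p} μ(s)^{−2}) ds for λ > 0, and Z(t) = (1/log t)∫₀^∞ μ(s)^{p + 1/log t} ds for t > e, Z(t) = 0 for 0 < t ≤ e. Then G and Z are bounded and ω(G) = (1/2)·Γ(p/2)·ω(Z), where Γ is the Euler Gamma function. (This is the heat semigroup formula relating τ(e^{−T^{−2}λ^{−2/p}}) to residues of the zeta function ζ(s) = τ(T^s) for a positive operator T with singular value function μ.) -/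

import Mathlib

open Filter MeasureTheory

/-- A function is (everywhere) bounded. -/
def BddFun (f : ℝ → ℝ) : Prop := ∃ C : ℝ, ∀ x, |f x| ≤ C

/-- The logarithmic Cesàro operator: `(Mf)(t) = (1/log t)∫₁^t f(s) ds/s` for `t > 1`,
and `0` otherwise. -/
noncomputable def Mop (f : ℝ → ℝ) : ℝ → ℝ := fun t =>
  if 1 < t then (∫ s in (1:ℝ)..t, f s / s) / Real.log t else 0

/-- `G(λ) = (1/λ)∫₀^∞ exp(−λ^{−2/p} μ(s)^{−2}) ds` for `λ > 0` (and `0` for `λ ≤ 0`). -/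
noncomputable def heatFn (p : ℝ) (μ : ℝ → ℝ) : ℝ → ℝ := fun lam =>
  if 0 < lam then
    (∫ s in Set.Ioi (0:ℝ), Real.exp (-(lam ^ (-(2 / p)) * μ s ^ (-(2:ℝ))))) / lam
  else 0

/-- `Z(t) = (1/log t)∫₀^∞ μ(s)^{p + 1/log t} ds` for `t > e` (and `0` for `t ≤ e`). -/
noncomputable def zetaPFn (p : ℝ) (μ : ℝ → ℝ) : ℝ → ℝ := fun t =>
  if Real.exp 1 < t then
    (∫ s in Set.Ioi (0:ℝ), μ s ^ (p + 1 / Real.log t)) / Real.log t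
  else 0

/-! The Mellin transform of the heat function is a zeta function: for `z > p`,
`∫₀^∞ λ^(-z/p) G(λ) dλ = (p/2) Γ(z/2) ∫₀^∞ μ(s)^z ds`. At `z = p + 1/log t` the part of the left
side over `λ > 1` is `p log t` times the Abel mean `∫₀^∞ e^(-v) G(T^v) dv` at `T = t^p`, and the
part over `λ ≤ 1` stays bounded as `t → ∞`. Dividing by `p log t`, one sees that `(1/2) Γ(p/2) Z`
and the Abel mean of `G`, precomposed with `t ↦ t^p`, agree asymptotically. No Tauberian theorem is
needed to pass from the Abel mean to `G`: invariance under `M` and the power maps gives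
`ω (t ↦ ∫_a^b f(t^v) dv) = (b - a) ω f`, hence `ω (t ↦ ∫₀^∞ φ(v) f(t^v) dv) = (∫₀^∞ φ) ω f`. -/

open Set
open scoped Topology

namespace BddFun

lemma sub {f g : ℝ → ℝ} (hf : BddFun f) (hg : BddFun g) : BddFun (f - g) := by
  obtain ⟨C, hC⟩ := hf
  obtain ⟨D, hD⟩ := hg
  exact ⟨C + D, fun x => (abs_sub _ _).trans (add_le_add (hC x) (hD x))⟩

lemma const_smul {f : ℝ → ℝ} (hf : BddFun f) (c : ℝ) : BddFun (c • f) := by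
  obtain ⟨C, hC⟩ := hf
  refine ⟨|c| * C, fun x => ?_⟩
  rw [Pi.smul_apply, smul_eq_mul, abs_mul]
  exact mul_le_mul_of_nonneg_left (hC x) (abs_nonneg c)

lemma comp {f : ℝ → ℝ} (hf : BddFun f) (g : ℝ → ℝ) : BddFun (fun t => f (g t)) :=
  hf.imp fun _ hC t => hC (g t)

end BddFun

/-- An extended limit at `+∞`: a linear functional lying between the essential lower and upper
limits. As in the theorem, `ω` is defined on all functions, but only its values at bounded
measurable ones are constrained. -/
def IsExtendedLimit (ω : (ℝ → ℝ) →ₗ[ℝ] ℝ) : Prop :=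
  ∀ f : ℝ → ℝ, Measurable f → BddFun f →
    liminf f (atTop ⊓ ae ((volume : Measure ℝ).restrict (Ioi 0))) ≤ ω f ∧
      ω f ≤ limsup f (atTop ⊓ ae ((volume : Measure ℝ).restrict (Ioi 0)))

/-- Invariance of `ω` under the power maps `P^a`, `a > 0`, on bounded measurable functions. -/
def IsPowerInvariant (ω : (ℝ → ℝ) →ₗ[ℝ] ℝ) : Prop :=
  ∀ f : ℝ → ℝ, Measurable f → BddFun f → ∀ a : ℝ, 0 < a → ω (fun t => f (t ^ a)) = ω f

/-- Invariance of `ω` under the logarithmic Cesàro operator on bounded measurable functions. -/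
def IsLogCesaroInvariant (ω : (ℝ → ℝ) →ₗ[ℝ] ℝ) : Prop :=
  ∀ f : ℝ → ℝ, Measurable f → BddFun f → ω (Mop f) = ω f

lemma neBot_atTop_inf_ae_restrict_Ioi (a : ℝ) :
    (atTop ⊓ ae ((volume : Measure ℝ).restrict (Ioi a))).NeBot := by
  refine inf_neBot_iff_frequently_left.2 fun {P} hP => frequently_ae_iff.2 fun hnull => ?_
  obtain ⟨b, hb⟩ := eventually_atTop.1 hP
  have hsub : Ioi (max b a) ⊆ {x | P x} := fun x hx => hb x ((le_max_left b a).trans (le_of_lt hx))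
  have htop : volume.restrict (Ioi a) (Ioi (max b a)) = ⊤ := by
    rw [Measure.restrict_apply measurableSet_Ioi, Ioi_inter_Ioi, Real.volume_Ioi]
  exact ENNReal.top_ne_zero (htop.symm.trans (measure_mono_null hsub hnull))

namespace IsExtendedLimit

variable {ω : (ℝ → ℝ) →ₗ[ℝ] ℝ} {f g : ℝ → ℝ} {C : ℝ}

lemma abs_apply_le (hω : IsExtendedLimit ω) (hf : Measurable f) (hfb : BddFun f)
    (h : ∀ᶠ t in atTop, |f t| ≤ C) : |ω f| ≤ C := by
  have := neBot_atTop_inf_ae_restrict_Ioi 0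
  obtain ⟨D, hD⟩ := hfb
  have h' : ∀ᶠ t in atTop ⊓ ae (volume.restrict (Ioi (0 : ℝ))), |f t| ≤ C :=
    h.filter_mono inf_le_left
  obtain ⟨hlow, hupp⟩ := hω f hf ⟨D, hD⟩
  refine abs_le.2 ⟨le_trans ?_ hlow, hupp.trans ?_⟩
  · exact le_liminf_of_le
      (isBoundedUnder_of ⟨D, fun t => (abs_le.1 (hD t)).2⟩).isCoboundedUnder_ge
      (h'.mono fun t ht => (abs_le.1 ht).1)
  · exact limsup_le_of_le
      (isBoundedUnder_of ⟨-D, fun t => (abs_le.1 (hD t)).1⟩).isCoboundedUnder_le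
      (h'.mono fun t ht => (abs_le.1 ht).2)

lemma apply_eq_of_tendsto_sub (hω : IsExtendedLimit ω) (hf : Measurable f) (hfb : BddFun f)
    (hg : Measurable g) (hgb : BddFun g) (h : Tendsto (f - g) atTop (𝓝 0)) : ω f = ω g := by
  rw [← sub_eq_zero, ← map_sub, ← abs_nonpos_iff]
  refine le_of_forall_pos_le_add fun ε hε => ?_
  rw [zero_add]
  refine hω.abs_apply_le (hf.sub hg) (hfb.sub hgb) ?_
  filter_upwards [(tendsto_zero_iff_abs_tendsto_zero _).1 h |>.eventually_lt_const hε] with t ht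
  exact ht.le

end IsExtendedLimit

/-- The average `∫₀^∞ φ(v) P^v f dv` of the power maps of `f` against the kernel `φ`. For `φ` the
indicator of `[0, 1]` it is `Mf` on `(1,∞)`, and for `φ(v) = exp (-v)` the corresponding Abel
mean. -/
noncomputable def powerMean (φ f : ℝ → ℝ) : ℝ → ℝ := fun t =>
  ∫ v in Ioi 0, φ v * f (t ^ v)

section PowerMean

variable {φ f : ℝ → ℝ} {C : ℝ} {s : Set ℝ}

lemma measurable_setIntegral_mul_comp_rpow (hφ : Measurable φ) (hf : Measurable f) (s : Set ℝ) :
    Measurable fun t => ∫ v in s, φ v * f (t ^ v) := by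
  have hjoint : StronglyMeasurable fun x : ℝ × ℝ => φ x.2 * f (x.1 ^ x.2) :=
    Measurable.stronglyMeasurable (by fun_prop)
  exact hjoint.integral_prod_right'.measurable

lemma measurable_intervalIntegral_mul_comp_rpow (hφ : Measurable φ) (hf : Measurable f) (a b : ℝ) :
    Measurable fun t => ∫ v in a..b, φ v * f (t ^ v) :=
  (measurable_setIntegral_mul_comp_rpow hφ hf _).sub (measurable_setIntegral_mul_comp_rpow hφ hf _)

lemma integrableOn_mul_comp_rpow (hφ : IntegrableOn φ s) (hf : Measurable f)
    (hC : ∀ x, |f x| ≤ C) (t : ℝ) : IntegrableOn (fun v => φ v * f (t ^ v)) s :=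
  hφ.mul_bdd (Measurable.aestronglyMeasurable (by fun_prop)) (ae_of_all _ fun v => hC (t ^ v))

lemma abs_setIntegral_mul_comp_rpow_le (hφ : IntegrableOn φ s) (hC : ∀ x, |f x| ≤ C) (t : ℝ) :
    |∫ v in s, φ v * f (t ^ v)| ≤ (∫ v in s, |φ v|) * C := by
  rw [← integral_mul_const, ← Real.norm_eq_abs]
  refine norm_integral_le_of_norm_le (hφ.abs.mul_const C) (ae_of_all _ fun v => ?_)
  rw [Real.norm_eq_abs, abs_mul]
  exact mul_le_mul_of_nonneg_left (hC _) (abs_nonneg _)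

lemma bddFun_powerMean (hφ : IntegrableOn φ (Ioi 0)) (hf : BddFun f) : BddFun (powerMean φ f) := by
  obtain ⟨C, hC⟩ := hf
  exact ⟨_, abs_setIntegral_mul_comp_rpow_le hφ hC⟩

lemma intervalIntegrable_mul_comp_rpow {a b : ℝ} (hφ : IntervalIntegrable φ volume a b)
    (hf : Measurable f) (hfb : BddFun f) (t : ℝ) :
    IntervalIntegrable (fun v => φ v * f (t ^ v)) volume a b := by
  obtain ⟨C, hC⟩ := hfb
  exact ⟨integrableOn_mul_comp_rpow hφ.1 hf hC t, integrableOn_mul_comp_rpow hφ.2 hf hC t⟩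

lemma bddFun_intervalIntegral_mul_comp_rpow {a b : ℝ} (hφ : IntervalIntegrable φ volume a b)
    (hf : BddFun f) : BddFun fun t => ∫ v in a..b, φ v * f (t ^ v) := by
  obtain ⟨C, hC⟩ := hf
  refine ⟨(∫ v in uIoc a b, |φ v|) * C, fun t => ?_⟩
  rw [intervalIntegral.abs_intervalIntegral_eq]
  exact abs_setIntegral_mul_comp_rpow_le hφ.def' hC t

lemma measurable_intervalIntegral_comp_rpow (hf : Measurable f) (a b : ℝ) :
    Measurable fun t => ∫ v in a..b, f (t ^ v) := by
  simpa only [one_mul] using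
    measurable_intervalIntegral_mul_comp_rpow (measurable_const (a := 1)) hf a b

lemma intervalIntegrable_comp_rpow (hf : Measurable f) (hfb : BddFun f) (a b t : ℝ) :
    IntervalIntegrable (fun v => f (t ^ v)) volume a b := by
  simpa only [one_mul] using
    intervalIntegrable_mul_comp_rpow (intervalIntegrable_const (c := 1)) hf hfb t

lemma bddFun_intervalIntegral_comp_rpow (hf : BddFun f) (a b : ℝ) :
    BddFun fun t => ∫ v in a..b, f (t ^ v) := by
  simpa only [one_mul] using
    bddFun_intervalIntegral_mul_comp_rpow (intervalIntegrable_const (c := 1)) hf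

lemma integral_Ioi_one_div_eq_log_mul {t : ℝ} (ht : 1 < t) (F : ℝ → ℝ) :
    ∫ x in Ioi (1 : ℝ), F x / x = Real.log t * ∫ v in Ioi (0 : ℝ), F (t ^ v) := by
  have hlog : 0 < Real.log t := Real.log_pos ht
  calc ∫ x in Ioi (1 : ℝ), F x / x = ∫ x in Ioi (1 : ℝ), x⁻¹ • F (Real.exp (Real.log x)) := by
        refine setIntegral_congr_fun measurableSet_Ioi fun x hx => ?_
        simp only [Real.exp_log (zero_lt_one.trans hx), smul_eq_mul, div_eq_inv_mul]
    _ = ∫ y in Ioi 0, F (Real.exp y) := by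
        rw [integral_comp_log_Ioi (fun y => F (Real.exp y)) zero_lt_one, Real.log_one]
    _ = Real.log t * ∫ v in Ioi 0, F (Real.exp (Real.log t * v)) := by
        rw [integral_comp_mul_left_Ioi (fun y => F (Real.exp y)) 0 hlog, mul_zero, smul_eq_mul,
          mul_inv_cancel_left₀ hlog.ne']
    _ = Real.log t * ∫ v in Ioi (0 : ℝ), F (t ^ v) := by
        simp only [Real.rpow_def_of_pos (zero_lt_one.trans ht)]

lemma Mop_eq_integral_comp_rpow {t : ℝ} (ht : 1 < t) (f : ℝ → ℝ) :
    Mop f t = ∫ v in (0 : ℝ)..1, f (t ^ v) := by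
  have hcut : ∀ v : ℝ, (Iic t).indicator f (t ^ v) = (Iic 1).indicator (fun v => f (t ^ v)) v := by
    intro v
    have : t ^ v ≤ t ↔ v ≤ 1 := by
      simpa only [Real.rpow_one] using Real.rpow_le_rpow_left_iff (y := v) (z := 1) ht
    simp only [indicator, mem_Iic, this]
  have hdiv : ∀ x, (Iic t).indicator (fun x => f x / x) x = (Iic t).indicator f x / x := by
    intro x
    simp only [indicator_apply, ite_div, zero_div]
  rw [Mop, if_pos ht, intervalIntegral.integral_of_le ht.le,
    intervalIntegral.integral_of_le zero_le_one, ← Ioi_inter_Iic, ← Ioi_inter_Iic,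
    ← setIntegral_indicator measurableSet_Iic, ← setIntegral_indicator measurableSet_Iic]
  simp only [hdiv]
  rw [integral_Ioi_one_div_eq_log_mul ht, mul_div_cancel_left₀ _ (Real.log_pos ht).ne']
  simp only [hcut]

lemma integral_comp_rpow_eq_mul {a t : ℝ} (ht : 0 ≤ t) (f : ℝ → ℝ) :
    ∫ v in (0 : ℝ)..a, f (t ^ v) = a * ∫ v in (0 : ℝ)..1, f ((t ^ a) ^ v) := by
  simp only [← Real.rpow_mul ht]
  rw [intervalIntegral.mul_integral_comp_mul_left (f := fun v => f (t ^ v)), mul_zero, mul_one]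

end PowerMean

namespace IsExtendedLimit

variable {ω : (ℝ → ℝ) →ₗ[ℝ] ℝ} {f φ : ℝ → ℝ}

lemma apply_integral_zero_one_comp_rpow (hω : IsExtendedLimit ω) (hM : IsLogCesaroInvariant ω)
    (hf : Measurable f) (hfb : BddFun f) : ω (fun t => ∫ v in (0 : ℝ)..1, f (t ^ v)) = ω f := by
  have hm := measurable_intervalIntegral_comp_rpow hf 0 1
  have hMop : Mop f = fun t => if 1 < t then ∫ v in (0 : ℝ)..1, f (t ^ v) else 0 := by
    ext t
    split_ifs with ht
    · exact Mop_eq_integral_comp_rpow ht f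
    · exact if_neg ht
  obtain ⟨C, hC⟩ := bddFun_intervalIntegral_comp_rpow hfb 0 1
  rw [← hM f hf hfb, hMop]
  refine hω.apply_eq_of_tendsto_sub hm ⟨C, hC⟩ (hm.ite measurableSet_Ioi measurable_const)
    ⟨C, fun t => ?_⟩ ?_
  · beta_reduce
    split_ifs
    · exact hC t
    · exact abs_zero.trans_le ((abs_nonneg _).trans (hC t))
  · refine tendsto_const_nhds.congr' ?_
    filter_upwards [eventually_gt_atTop 1] with t ht
    rw [Pi.sub_apply, if_pos ht, sub_self]

lemma apply_integral_zero_comp_rpow (hω : IsExtendedLimit ω) (hpow : IsPowerInvariant ω)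
    (hM : IsLogCesaroInvariant ω) (hf : Measurable f) (hfb : BddFun f) {a : ℝ} (ha : 0 ≤ a) :
    ω (fun t => ∫ v in (0 : ℝ)..a, f (t ^ v)) = a * ω f := by
  obtain rfl | ha := ha.eq_or_lt
  · simp only [intervalIntegral.integral_same, zero_mul]
    exact map_zero ω
  have hm := measurable_intervalIntegral_comp_rpow hf 0
  have hb := bddFun_intervalIntegral_comp_rpow hfb 0
  rw [← hω.apply_integral_zero_one_comp_rpow hM hf hfb, ← hpow _ (hm 1) (hb 1) a ha, ← smul_eq_mul,
    ← map_smul]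
  refine hω.apply_eq_of_tendsto_sub (hm a) (hb a)
    (((hm 1).comp (measurable_id.pow_const a)).const_smul a) (((hb 1).comp _).const_smul a) ?_
  refine tendsto_const_nhds.congr' ?_
  filter_upwards [eventually_ge_atTop 0] with t ht
  rw [Pi.sub_apply, Pi.smul_apply, smul_eq_mul, integral_comp_rpow_eq_mul ht, sub_self]

lemma apply_integral_comp_rpow (hω : IsExtendedLimit ω) (hpow : IsPowerInvariant ω)
    (hM : IsLogCesaroInvariant ω) (hf : Measurable f) (hfb : BddFun f) {a b : ℝ} (ha : 0 ≤ a)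
    (hb : 0 ≤ b) : ω (fun t => ∫ v in a..b, f (t ^ v)) = (b - a) * ω f := by
  have hi := intervalIntegrable_comp_rpow hf hfb 0
  have hsub : (fun t => ∫ v in a..b, f (t ^ v)) =
      (fun t => ∫ v in (0 : ℝ)..b, f (t ^ v)) - fun t => ∫ v in (0 : ℝ)..a, f (t ^ v) :=
    funext fun t => (intervalIntegral.integral_interval_sub_left (hi b t) (hi a t)).symm
  rw [hsub, map_sub, hω.apply_integral_zero_comp_rpow hpow hM hf hfb ha,
    hω.apply_integral_zero_comp_rpow hpow hM hf hfb hb, sub_mul]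

lemma apply_integral_mul_comp_rpow_sub (hω : IsExtendedLimit ω) (hpow : IsPowerInvariant ω)
    (hM : IsLogCesaroInvariant ω) (hφ : Continuous φ) (hf : Measurable f) (hfb : BddFun f)
    {a b : ℝ} (ha : 0 ≤ a) (hb : 0 ≤ b) (c : ℝ) :
    ω (fun t => ∫ v in (0 : ℝ)..b, φ v * f (t ^ v)) -
        ω (fun t => ∫ v in (0 : ℝ)..a, φ v * f (t ^ v)) - (b - a) * (c * ω f) =
      ω fun t => ∫ v in a..b, (φ v - c) * f (t ^ v) := by
  have hint : ∀ x y t : ℝ, IntervalIntegrable (fun v => φ v * f (t ^ v)) volume x y := fun x y =>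
    intervalIntegrable_mul_comp_rpow (hφ.intervalIntegrable x y) hf hfb
  have hsplit : (fun t => ∫ v in a..b, (φ v - c) * f (t ^ v)) =
      (fun t => ∫ v in (0 : ℝ)..b, φ v * f (t ^ v)) -
        (fun t => ∫ v in (0 : ℝ)..a, φ v * f (t ^ v)) - c • fun t => ∫ v in a..b, f (t ^ v) := by
    ext t
    simp only [Pi.sub_apply, Pi.smul_apply, smul_eq_mul, sub_mul]
    rw [intervalIntegral.integral_interval_sub_left (hint 0 b t) (hint 0 a t),
      intervalIntegral.integral_sub (hint a b t)
        ((intervalIntegrable_comp_rpow hf hfb a b t).const_mul c),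
      intervalIntegral.integral_const_mul]
  rw [hsplit, map_sub, map_sub, map_smul, hω.apply_integral_comp_rpow hpow hM hf hfb ha hb,
    smul_eq_mul, mul_left_comm]

lemma hasDerivWithinAt_apply_integral_mul_comp_rpow (hω : IsExtendedLimit ω)
    (hpow : IsPowerInvariant ω) (hM : IsLogCesaroInvariant ω) (hφ : Continuous φ)
    (hf : Measurable f) (hfb : BddFun f) {a : ℝ} (ha : 0 ≤ a) :
    HasDerivWithinAt (fun b => ω fun t => ∫ v in (0 : ℝ)..b, φ v * f (t ^ v)) (φ a * ω f)
      (Ici 0) a := by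
  have hremainder := fun (b : ℝ) (hb : 0 ≤ b) =>
    hω.apply_integral_mul_comp_rpow_sub hpow hM hφ hf hfb ha hb (φ a)
  obtain ⟨C, hC⟩ := hfb
  rw [hasDerivWithinAt_iff_isLittleO, Asymptotics.isLittleO_iff]
  intro ε hε
  have hC_pos : 0 < |C| + 1 := by positivity
  obtain ⟨δ, hδ, hφδ⟩ := Metric.continuous_iff.1 hφ a (ε / (|C| + 1)) (div_pos hε hC_pos)
  filter_upwards [self_mem_nhdsWithin, mem_nhdsWithin_of_mem_nhds (Metric.ball_mem_nhds a hδ)]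
    with b hb hbδ
  have hψ : Continuous fun v => φ v - φ a := hφ.sub continuous_const
  rw [smul_eq_mul, hremainder b hb, Real.norm_eq_abs, Real.norm_eq_abs]
  refine hω.abs_apply_le (measurable_intervalIntegral_mul_comp_rpow hψ.measurable hf a b)
    (bddFun_intervalIntegral_mul_comp_rpow (hψ.intervalIntegrable a b) ⟨C, hC⟩)
    (Eventually.of_forall fun t => ?_)
  rw [← Real.norm_eq_abs]
  refine intervalIntegral.norm_integral_le_of_norm_le_const fun v hv => ?_
  have hv_dist : dist v a < δ :=
    (abs_sub_left_of_mem_uIcc (uIoc_subset_uIcc hv)).trans_lt hbδ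
  calc ‖(φ v - φ a) * f (t ^ v)‖ = |φ v - φ a| * |f (t ^ v)| := abs_mul _ _
    _ ≤ ε / (|C| + 1) * (|C| + 1) := by
      gcongr
      · exact (hφδ v hv_dist).le
      · exact (hC _).trans ((le_abs_self C).trans (le_add_of_nonneg_right zero_le_one))
    _ = ε := div_mul_cancel₀ _ hC_pos.ne'

lemma apply_integral_zero_mul_comp_rpow (hω : IsExtendedLimit ω) (hpow : IsPowerInvariant ω)
    (hM : IsLogCesaroInvariant ω) (hφ : Continuous φ) (hf : Measurable f) (hfb : BddFun f)
    {A : ℝ} (hA : 0 ≤ A) :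
    ω (fun t => ∫ v in (0 : ℝ)..A, φ v * f (t ^ v)) = (∫ v in (0 : ℝ)..A, φ v) * ω f := by
  have hderiv := fun a (ha : 0 ≤ a) =>
    hω.hasDerivWithinAt_apply_integral_mul_comp_rpow hpow hM hφ hf hfb ha
  have hFTC := intervalIntegral.integral_eq_sub_of_hasDerivAt_of_le hA
    (fun a ha => (hderiv a ha.1).continuousWithinAt.mono Icc_subset_Ici_self)
    (fun a ha => (hderiv a ha.1.le).hasDerivAt (Ici_mem_nhds ha.1))
    ((hφ.mul continuous_const).intervalIntegrable 0 A)
  have hzero : ω (fun t => ∫ v in (0 : ℝ)..0, φ v * f (t ^ v)) = 0 := by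
    simp only [intervalIntegral.integral_same]
    exact map_zero ω
  rw [intervalIntegral.integral_mul_const, hzero, sub_zero] at hFTC
  exact hFTC.symm

theorem apply_powerMean (hω : IsExtendedLimit ω) (hpow : IsPowerInvariant ω)
    (hM : IsLogCesaroInvariant ω) (hφ : Continuous φ) (hφi : IntegrableOn φ (Ioi 0))
    (hf : Measurable f) (hfb : BddFun f) :
    ω (powerMean φ f) = (∫ v in Ioi 0, φ v) * ω f := by
  obtain ⟨C, hC⟩ := hfb
  have hmeas := measurable_setIntegral_mul_comp_rpow hφ.measurable hf
  have hbdd : ∀ {s}, IntegrableOn φ s → BddFun fun t => ∫ v in s, φ v * f (t ^ v) :=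
    fun h => ⟨_, abs_setIntegral_mul_comp_rpow_le h hC⟩
  have htail : ∀ A : ℝ, 0 ≤ A →
      |ω (powerMean φ f) - (∫ v in (0 : ℝ)..A, φ v) * ω f| ≤ (∫ v in Ioi A, |φ v|) * C := by
    intro A hA
    have hφA : IntegrableOn φ (Ioi A) := hφi.mono_set (Ioi_subset_Ioi hA)
    have hsplit : (powerMean φ f - fun t => ∫ v in (0 : ℝ)..A, φ v * f (t ^ v)) =
        fun t => ∫ v in Ioi A, φ v * f (t ^ v) := by
      ext t
      rw [Pi.sub_apply, sub_eq_iff_eq_add', powerMean]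
      exact (intervalIntegral.integral_interval_add_Ioi (integrableOn_mul_comp_rpow hφi hf hC t)
        (integrableOn_mul_comp_rpow hφA hf hC t)).symm
    rw [← hω.apply_integral_zero_mul_comp_rpow hpow hM hφ hf ⟨C, hC⟩ hA, ← map_sub, hsplit]
    exact hω.abs_apply_le (hmeas _) (hbdd hφA)
      (Eventually.of_forall (abs_setIntegral_mul_comp_rpow_le hφA hC))
  have htail_tendsto : Tendsto (fun A => (∫ v in Ioi A, |φ v|) * C) atTop (𝓝 0) := by
    simpa only [zero_mul, id] using (tendsto_integral_Ioi_zero tendsto_id).mul_const C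
  have hlim := (intervalIntegral_tendsto_integral_Ioi 0 hφi tendsto_id).mul_const (ω f)
  refine tendsto_nhds_unique ?_ hlim
  rw [tendsto_iff_norm_sub_tendsto_zero]
  refine squeeze_zero' (Eventually.of_forall fun A => norm_nonneg _) ?_ htail_tendsto
  filter_upwards [eventually_ge_atTop 0] with A hA
  rw [norm_sub_rev]
  exact htail A hA

end IsExtendedLimit

section Mellin

variable {p z m : ℝ} {μ : ℝ → ℝ}

/-- The integrand of the Mellin transform of the heat function at the exponent `z / p`, for a
singular value `m`. -/
noncomputable def heatMellinKernel (p z l m : ℝ) : ℝ :=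
  l ^ (-(z / p)) * (Real.exp (-(l ^ (-(2 / p)) * m ^ (-(2 : ℝ)))) / l)

lemma integral_heatMellinKernel (hp : 0 < p) (hz : 0 < z) (hm : 0 < m) :
    ∫ l in Ioi 0, heatMellinKernel p z l m = p / 2 * Real.Gamma (z / 2) * m ^ z := by
  set g : ℝ → ℝ := fun y => y ^ (z / 2 - 1) * Real.exp (-(m ^ (-(2 : ℝ)) * y))
  have hkernel : ∀ l ∈ Ioi (0 : ℝ), heatMellinKernel p z l m =
      p / 2 * ((|-(2 / p)| * l ^ (-(2 / p) - 1)) • g (l ^ (-(2 / p)))) := by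
    intro l (hl : 0 < l)
    have hexp : l ^ (-(z / p)) / l = l ^ (-(2 / p) - 1) * (l ^ (-(2 / p))) ^ (z / 2 - 1) := by
      rw [← Real.rpow_sub_one hl.ne', ← Real.rpow_mul hl.le, ← Real.rpow_add hl]
      congr 1
      field_simp
      ring
    have habs : p / 2 * |-(2 / p)| = 1 := by
      rw [abs_neg, abs_of_pos (div_pos two_pos hp), div_mul_div_cancel₀ two_ne_zero,
        div_self hp.ne']
    calc heatMellinKernel p z l m
        = l ^ (-(z / p)) / l * Real.exp (-(m ^ (-(2 : ℝ)) * l ^ (-(2 / p)))) := by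
          rw [heatMellinKernel, mul_div_assoc', div_mul_eq_mul_div, mul_comm (m ^ (-(2 : ℝ)))]
      _ = p / 2 * |-(2 / p)| * (l ^ (-(2 / p) - 1) * g (l ^ (-(2 / p)))) := by
          rw [hexp, habs, one_mul, mul_assoc]
      _ = p / 2 * ((|-(2 / p)| * l ^ (-(2 / p) - 1)) • g (l ^ (-(2 / p)))) := by
          rw [smul_eq_mul, mul_assoc, mul_assoc]
  calc ∫ l in Ioi 0, heatMellinKernel p z l m
      = p / 2 * ∫ y in Ioi 0, g y := by
        rw [setIntegral_congr_fun measurableSet_Ioi hkernel, integral_const_mul,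
          integral_comp_rpow_Ioi g (neg_ne_zero.2 (div_pos two_pos hp).ne')]
    _ = p / 2 * ((1 / m ^ (-(2 : ℝ))) ^ (z / 2) * Real.Gamma (z / 2)) := by
        rw [Real.integral_rpow_mul_exp_neg_mul_Ioi (half_pos hz) (Real.rpow_pos_of_pos hm _)]
    _ = p / 2 * Real.Gamma (z / 2) * m ^ z := by
        rw [one_div, ← Real.rpow_neg hm.le, neg_neg, ← Real.rpow_mul hm.le,
          mul_div_cancel₀ z two_ne_zero]
        ring

lemma heatMellinKernel_nonneg {l : ℝ} (hl : 0 ≤ l) : 0 ≤ heatMellinKernel p z l m :=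
  mul_nonneg (Real.rpow_nonneg hl _) (div_nonneg (Real.exp_nonneg _) hl)

lemma integrableOn_heatMellinKernel (hp : 0 < p) (hz : 0 < z) (hm : 0 < m) :
    IntegrableOn (fun l => heatMellinKernel p z l m) (Ioi 0) := by
  refine Integrable.of_integral_ne_zero ?_
  rw [integral_heatMellinKernel hp hz hm]
  have := Real.Gamma_pos_of_pos (half_pos hz)
  positivity

lemma integrable_prod_heatMellinKernel (hp : 0 < p) (hz : 0 < z)
    (hμ : AEMeasurable μ (volume.restrict (Ioi 0))) (hμ_pos : ∀ s, 0 < s → 0 < μ s)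
    (hμ_int : IntegrableOn (fun s => μ s ^ z) (Ioi 0)) :
    Integrable (fun x : ℝ × ℝ => heatMellinKernel p z x.1 (μ x.2))
      ((volume.restrict (Ioi 0)).prod (volume.restrict (Ioi 0))) := by
  have hmeas : AEMeasurable (fun x : ℝ × ℝ => heatMellinKernel p z x.1 (μ x.2))
      ((volume.restrict (Ioi 0)).prod (volume.restrict (Ioi 0))) := by
    have := hμ.comp_snd (μ := volume.restrict (Ioi (0 : ℝ)))
    unfold heatMellinKernel
    fun_prop
  refine (integrable_prod_iff' hmeas.aestronglyMeasurable).2 ⟨?_, ?_⟩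
  · filter_upwards [ae_restrict_mem measurableSet_Ioi] with s hs
    exact integrableOn_heatMellinKernel hp hz (hμ_pos s hs)
  · refine IntegrableOn.congr_fun (hμ_int.const_mul (p / 2 * Real.Gamma (z / 2)))
      (fun s hs => ?_) measurableSet_Ioi
    rw [← integral_heatMellinKernel hp hz (hμ_pos s hs)]
    refine setIntegral_congr_fun measurableSet_Ioi fun l (hl : 0 < l) => ?_
    exact (Real.norm_of_nonneg (heatMellinKernel_nonneg hl.le)).symm

lemma rpow_mul_heatFn {l : ℝ} (hl : 0 < l) :
    l ^ (-(z / p)) * heatFn p μ l = ∫ s in Ioi 0, heatMellinKernel p z l (μ s) := by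
  rw [heatFn, if_pos hl, ← integral_div, ← integral_const_mul]
  rfl

lemma integrableOn_rpow_mul_heatFn (hp : 0 < p) (hz : 0 < z)
    (hμ : AEMeasurable μ (volume.restrict (Ioi 0))) (hμ_pos : ∀ s, 0 < s → 0 < μ s)
    (hμ_int : IntegrableOn (fun s => μ s ^ z) (Ioi 0)) :
    IntegrableOn (fun l => l ^ (-(z / p)) * heatFn p μ l) (Ioi 0) :=
  IntegrableOn.congr_fun
    (integrable_prod_heatMellinKernel hp hz hμ hμ_pos hμ_int).integral_prod_left
    (fun _ hl => (rpow_mul_heatFn hl).symm) measurableSet_Ioi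

theorem integral_rpow_mul_heatFn (hp : 0 < p) (hz : 0 < z)
    (hμ : AEMeasurable μ (volume.restrict (Ioi 0))) (hμ_pos : ∀ s, 0 < s → 0 < μ s)
    (hμ_int : IntegrableOn (fun s => μ s ^ z) (Ioi 0)) :
    ∫ l in Ioi 0, l ^ (-(z / p)) * heatFn p μ l =
      p / 2 * Real.Gamma (z / 2) * ∫ s in Ioi 0, μ s ^ z := by
  calc ∫ l in Ioi 0, l ^ (-(z / p)) * heatFn p μ l
      = ∫ l in Ioi 0, ∫ s in Ioi 0, heatMellinKernel p z l (μ s) :=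
        setIntegral_congr_fun measurableSet_Ioi fun _ hl => rpow_mul_heatFn hl
    _ = ∫ s in Ioi 0, ∫ l in Ioi 0, heatMellinKernel p z l (μ s) :=
        integral_integral_swap (integrable_prod_heatMellinKernel hp hz hμ hμ_pos hμ_int)
    _ = ∫ s in Ioi 0, p / 2 * Real.Gamma (z / 2) * μ s ^ z :=
        setIntegral_congr_fun measurableSet_Ioi fun s hs =>
          integral_heatMellinKernel hp hz (hμ_pos s hs)
    _ = p / 2 * Real.Gamma (z / 2) * ∫ s in Ioi 0, μ s ^ z := integral_const_mul _ _

end Mellin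

section Bounds

variable {p z K : ℝ} {μ : ℝ → ℝ}

lemma integral_Ioi_one_add_rpow {a : ℝ} (ha : a < -1) :
    ∫ s in Ioi (0 : ℝ), (1 + s) ^ a = -1 / (a + 1) := by
  have hshift := (measurePreserving_add_left volume (1 : ℝ)).setIntegral_preimage_emb
    (measurableEmbedding_addLeft 1) (fun x => x ^ a) (Ioi 1)
  rw [preimage_const_add_Ioi, sub_self, integral_Ioi_rpow_of_lt ha zero_lt_one,
    Real.one_rpow] at hshift
  exact hshift

lemma integrableOn_one_add_rpow {a : ℝ} (ha : a < -1) :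
    IntegrableOn (fun s : ℝ => (1 + s) ^ a) (Ioi 0) := by
  simp only [add_comm (1 : ℝ)]
  exact integrableOn_add_rpow_Ioi_of_lt ha neg_one_lt_zero

lemma rpow_le_mul_one_add_rpow (hz : 0 ≤ z) {s m : ℝ} (hs : 0 ≤ s) (hK : 0 ≤ K) (hm : 0 ≤ m)
    (h : m ≤ K * (1 + s) ^ (-(1 / p))) : m ^ z ≤ K ^ z * (1 + s) ^ (-(z / p)) := by
  have hs1 : 0 ≤ 1 + s := by positivity
  calc m ^ z ≤ (K * (1 + s) ^ (-(1 / p))) ^ z := Real.rpow_le_rpow hm h hz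
    _ = K ^ z * (1 + s) ^ (-(z / p)) := by
      rw [Real.mul_rpow hK (Real.rpow_nonneg hs1 _), ← Real.rpow_mul hs1]
      congr 2
      ring

lemma neg_div_lt_neg_one (hp : 0 < p) (hz : p < z) : -(z / p) < -1 :=
  neg_lt_neg ((one_lt_div hp).2 hz)

lemma integrableOn_rpow_of_le (hp : 0 < p) (hz : p < z) (hK : 0 < K)
    (hμ : AEMeasurable μ (volume.restrict (Ioi 0))) (hμ_pos : ∀ s, 0 < s → 0 < μ s)
    (hμ_le : ∀ s, 0 < s → μ s ≤ K * (1 + s) ^ (-(1 / p))) :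
    IntegrableOn (fun s => μ s ^ z) (Ioi 0) := by
  have ha := neg_div_lt_neg_one hp hz
  refine ((integrableOn_one_add_rpow ha).const_mul (K ^ z)).mono'
    (hμ.pow_const z).aestronglyMeasurable ?_
  filter_upwards [ae_restrict_mem measurableSet_Ioi] with s hs
  rw [Real.norm_of_nonneg (Real.rpow_nonneg (hμ_pos s hs).le z)]
  exact rpow_le_mul_one_add_rpow (hp.trans hz).le (le_of_lt hs) hK.le (hμ_pos s hs).le (hμ_le s hs)

lemma integral_rpow_le_of_le (hp : 0 < p) (hz : p < z) (hK : 0 ≤ K)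
    (hμ_pos : ∀ s, 0 < s → 0 < μ s)
    (hμ_le : ∀ s, 0 < s → μ s ≤ K * (1 + s) ^ (-(1 / p))) :
    ∫ s in Ioi 0, μ s ^ z ≤ K ^ z * (p / (z - p)) := by
  have ha := neg_div_lt_neg_one hp hz
  calc ∫ s in Ioi 0, μ s ^ z ≤ ∫ s in Ioi (0 : ℝ), K ^ z * (1 + s) ^ (-(z / p)) := by
        refine integral_mono_of_nonneg ?_ ((integrableOn_one_add_rpow ha).const_mul (K ^ z)) ?_
        all_goals filter_upwards [ae_restrict_mem measurableSet_Ioi] with s hs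
        · exact Real.rpow_nonneg (hμ_pos s hs).le z
        · exact rpow_le_mul_one_add_rpow (hp.trans hz).le (le_of_lt hs) hK (hμ_pos s hs).le
            (hμ_le s hs)
    _ = K ^ z * (p / (z - p)) := by
        rw [integral_const_mul, integral_Ioi_one_add_rpow ha]
        have hexp : -(z / p) + 1 = -((z - p) / p) := by rw [sub_div, div_self hp.ne']; ring
        rw [hexp, neg_div_neg_eq, one_div_div]

lemma zetaPFn_le (hp : 0 < p) (hK : 0 ≤ K) (hμ_pos : ∀ s, 0 < s → 0 < μ s)
    (hμ_le : ∀ s, 0 < s → μ s ≤ K * (1 + s) ^ (-(1 / p))) (t : ℝ) :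
    zetaPFn p μ t ≤ max 1 K ^ (p + 1) * p := by
  rw [zetaPFn]
  split_ifs with ht
  · have hlog : 1 < Real.log t := (Real.lt_log_iff_exp_lt ((Real.exp_pos 1).trans ht)).2 ht
    have hlog_pos := zero_lt_one.trans hlog
    have hz : p < p + 1 / Real.log t := lt_add_of_pos_right p (one_div_pos.2 hlog_pos)
    rw [div_le_iff₀ hlog_pos]
    calc ∫ s in Ioi 0, μ s ^ (p + 1 / Real.log t)
        ≤ K ^ (p + 1 / Real.log t) * (p / (p + 1 / Real.log t - p)) :=
          integral_rpow_le_of_le hp hz hK hμ_pos hμ_le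
      _ = K ^ (p + 1 / Real.log t) * p * Real.log t := by
          rw [add_sub_cancel_left, div_div_eq_mul_div, div_one, mul_assoc]
      _ ≤ max 1 K ^ (p + 1) * p * Real.log t := by
          gcongr
          calc K ^ (p + 1 / Real.log t) ≤ max 1 K ^ (p + 1 / Real.log t) :=
                Real.rpow_le_rpow hK (le_max_right 1 K) (hp.trans hz).le
            _ ≤ max 1 K ^ (p + 1) := Real.rpow_le_rpow_of_exponent_le (le_max_left 1 K)
                (by gcongr; exact (div_le_one hlog_pos).2 hlog.le)
  · positivity

lemma zetaPFn_nonneg (hμ_pos : ∀ s, 0 < s → 0 < μ s) (t : ℝ) : 0 ≤ zetaPFn p μ t := by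
  rw [zetaPFn]
  split_ifs with ht
  · refine div_nonneg (setIntegral_nonneg measurableSet_Ioi fun s hs => ?_) ?_
    · exact Real.rpow_nonneg (hμ_pos s hs).le _
    · exact Real.log_nonneg ((Real.one_le_exp zero_le_one).trans ht.le)
  · exact le_rfl

lemma bddFun_zetaPFn (hp : 0 < p) (hK : 0 ≤ K) (hμ_pos : ∀ s, 0 < s → 0 < μ s)
    (hμ_le : ∀ s, 0 < s → μ s ≤ K * (1 + s) ^ (-(1 / p))) : BddFun (zetaPFn p μ) :=
  ⟨max 1 K ^ (p + 1) * p, fun t => abs_le.2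
    ⟨(neg_nonpos.2 (by positivity)).trans (zetaPFn_nonneg hμ_pos t),
      zetaPFn_le hp hK hμ_pos hμ_le t⟩⟩

lemma heatFn_nonneg (p : ℝ) (μ : ℝ → ℝ) (l : ℝ) : 0 ≤ heatFn p μ l := by
  rw [heatFn]
  split_ifs with hl
  · exact div_nonneg (integral_nonneg fun s => Real.exp_nonneg _) hl.le
  · exact le_rfl

lemma mul_rpow_le_rpow_neg_two (hp : 0 < p) {s m : ℝ} (hs : 0 < s) (hK : 0 < K) (hm : 0 < m)
    (h : m ≤ K * (1 + s) ^ (-(1 / p))) : K ^ (-(2 : ℝ)) * s ^ (2 / p) ≤ m ^ (-(2 : ℝ)) := by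
  calc K ^ (-(2 : ℝ)) * s ^ (2 / p) ≤ K ^ (-(2 : ℝ)) * (1 + s) ^ (2 / p) := by
        gcongr
        exact le_add_of_nonneg_left zero_le_one
    _ = (K ^ (2 : ℝ) * (1 + s) ^ (-(2 / p)))⁻¹ := by
        rw [mul_inv, ← Real.rpow_neg hK.le, ← Real.rpow_neg (by positivity), neg_neg]
    _ ≤ (m ^ (2 : ℝ))⁻¹ := by
        gcongr
        exact rpow_le_mul_one_add_rpow zero_le_two hs.le hK.le hm.le h
    _ = m ^ (-(2 : ℝ)) := (Real.rpow_neg hm.le 2).symm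

lemma heatFn_le (hp : 0 < p) (hK : 0 < K) (hμ_pos : ∀ s, 0 < s → 0 < μ s)
    (hμ_le : ∀ s, 0 < s → μ s ≤ K * (1 + s) ^ (-(1 / p))) (l : ℝ) :
    heatFn p μ l ≤ K ^ p * Real.Gamma (p / 2 + 1) := by
  have := Real.Gamma_pos_of_pos (add_pos (half_pos hp) one_pos)
  rw [heatFn]
  split_ifs with hl
  · set b : ℝ := l ^ (-(2 / p)) * K ^ (-(2 : ℝ)) with hb
    have hb_pos : 0 < b := by positivity
    have hb_rpow : b ^ (-1 / (2 / p)) = l * K ^ p := by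
      rw [hb, Real.mul_rpow (by positivity) (by positivity), ← Real.rpow_mul hl.le,
        ← Real.rpow_mul hK.le]
      have hl_exp : -(2 / p) * (-1 / (2 / p)) = 1 := by field_simp
      have hK_exp : -(2 : ℝ) * (-1 / (2 / p)) = p := by field_simp
      rw [hl_exp, hK_exp, Real.rpow_one]
    rw [div_le_iff₀ hl]
    calc ∫ s in Ioi 0, Real.exp (-(l ^ (-(2 / p)) * μ s ^ (-(2 : ℝ))))
        ≤ ∫ s in Ioi (0 : ℝ), Real.exp (-b * s ^ (2 / p)) := by
          refine integral_mono_of_nonneg (ae_of_all _ fun s => Real.exp_nonneg _) ?_ ?_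
          · simpa only [Real.rpow_zero, one_mul, IntegrableOn] using
              integrableOn_rpow_mul_exp_neg_mul_rpow neg_one_lt_zero (div_pos two_pos hp) hb_pos
          · filter_upwards [ae_restrict_mem measurableSet_Ioi] with s hs
            rw [Real.exp_le_exp, neg_mul, hb, mul_assoc]
            gcongr
            exact mul_rpow_le_rpow_neg_two hp hs hK (hμ_pos s hs) (hμ_le s hs)
      _ = K ^ p * Real.Gamma (p / 2 + 1) * l := by
          rw [integral_exp_neg_mul_rpow (div_pos two_pos hp) hb_pos, hb_rpow, one_div_div]
          ring
  · positivity

lemma bddFun_heatFn (hp : 0 < p) (hK : 0 < K) (hμ_pos : ∀ s, 0 < s → 0 < μ s)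
    (hμ_le : ∀ s, 0 < s → μ s ≤ K * (1 + s) ^ (-(1 / p))) : BddFun (heatFn p μ) :=
  ⟨K ^ p * Real.Gamma (p / 2 + 1), fun l =>
    (abs_of_nonneg (heatFn_nonneg p μ l)).trans_le (heatFn_le hp hK hμ_pos hμ_le l)⟩

end Bounds

section Measurability

variable {p : ℝ} {μ : ℝ → ℝ}

lemma measurable_integral_comp_of_aemeasurable {ν : Measure ℝ} [SFinite ν] (hμ : AEMeasurable μ ν)
    {F : ℝ × ℝ → ℝ} (hF : Measurable F) : Measurable fun t => ∫ s, F (t, μ s) ∂ν := by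
  have hmap : ∀ t, ∫ y, F (t, y) ∂(ν.map μ) = ∫ s, F (t, μ s) ∂ν := fun t =>
    integral_map hμ (hF.comp measurable_prodMk_left).aestronglyMeasurable
  simp only [← hmap]
  exact hF.stronglyMeasurable.integral_prod_right'.measurable

lemma measurable_heatFn (hμ : AEMeasurable μ (volume.restrict (Ioi 0))) :
    Measurable (heatFn p μ) := by
  have hint := measurable_integral_comp_of_aemeasurable hμ
    (F := fun x => Real.exp (-(x.1 ^ (-(2 / p)) * x.2 ^ (-(2 : ℝ))))) (by fun_prop)
  exact (hint.div measurable_id).ite measurableSet_Ioi measurable_const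

lemma measurable_zetaPFn (hμ : AEMeasurable μ (volume.restrict (Ioi 0))) :
    Measurable (zetaPFn p μ) := by
  have hint := measurable_integral_comp_of_aemeasurable hμ
    (F := fun x => x.2 ^ (p + 1 / Real.log x.1)) (by fun_prop)
  exact (hint.div Real.measurable_log).ite measurableSet_Ioi measurable_const

end Measurability

section AbelMean

variable {p K : ℝ} {μ : ℝ → ℝ}

lemma integral_Ioi_one_rpow_mul_eq_log_mul_powerMean {T : ℝ} (hT : 1 < T) (f : ℝ → ℝ) :
    ∫ l in Ioi (1 : ℝ), l ^ (-(1 + 1 / Real.log T)) * f l =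
      Real.log T * powerMean (fun v => Real.exp (-v)) f T := by
  have hlog := (Real.log_pos hT).ne'
  have hexp : ∀ v : ℝ, (T ^ v) ^ (-(1 / Real.log T)) = Real.exp (-v) := by
    intro v
    rw [← Real.rpow_mul (zero_le_one.trans hT.le), Real.rpow_def_of_pos (zero_lt_one.trans hT)]
    congr 1
    field_simp
  calc ∫ l in Ioi (1 : ℝ), l ^ (-(1 + 1 / Real.log T)) * f l
      = ∫ l in Ioi (1 : ℝ), l ^ (-(1 / Real.log T)) * f l / l := by
        refine setIntegral_congr_fun measurableSet_Ioi fun l hl => ?_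
        rw [add_comm (1 : ℝ), neg_add', Real.rpow_sub_one (zero_lt_one.trans hl).ne',
          div_mul_eq_mul_div]
    _ = Real.log T * powerMean (fun v => Real.exp (-v)) f T := by
        rw [integral_Ioi_one_div_eq_log_mul hT (fun l => l ^ (-(1 / Real.log T)) * f l)]
        simp only [hexp, powerMean]

lemma exists_abs_integral_Ioc_rpow_mul_heatFn_le (hp : 0 < p) (hK : 0 < K)
    (hμ : AEMeasurable μ (volume.restrict (Ioi 0))) (hμ_pos : ∀ s, 0 < s → 0 < μ s)
    (hμ_le : ∀ s, 0 < s → μ s ≤ K * (1 + s) ^ (-(1 / p))) :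
    ∃ C, ∀ z ≤ 2 * p, |∫ l in Ioc 0 1, l ^ (-(z / p)) * heatFn p μ l| ≤ C := by
  have hint := integrableOn_rpow_mul_heatFn hp (mul_pos two_pos hp) hμ hμ_pos
    (integrableOn_rpow_of_le hp (lt_two_mul_self hp) hK hμ hμ_pos hμ_le)
  refine ⟨∫ l in Ioc 0 1, l ^ (-(2 * p / p)) * heatFn p μ l, fun z hz => ?_⟩
  rw [← Real.norm_eq_abs]
  refine norm_integral_le_of_norm_le (hint.mono_set Ioc_subset_Ioi_self) ?_
  filter_upwards [ae_restrict_mem measurableSet_Ioc] with l hl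
  have := heatFn_nonneg p μ l
  have := Real.rpow_nonneg hl.1.le (-(z / p))
  rw [Real.norm_of_nonneg (by positivity)]
  gcongr ?_ * _
  exact Real.rpow_le_rpow_of_exponent_ge hl.1 hl.2 (neg_le_neg (by gcongr))

lemma half_Gamma_mul_zetaPFn_sub_powerMean_eq (hp : 0 < p) (hK : 0 < K)
    (hμ : AEMeasurable μ (volume.restrict (Ioi 0))) (hμ_pos : ∀ s, 0 < s → 0 < μ s)
    (hμ_le : ∀ s, 0 < s → μ s ≤ K * (1 + s) ^ (-(1 / p))) {t : ℝ} (ht : Real.exp 1 < t) :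
    1 / 2 * Real.Gamma ((p + 1 / Real.log t) / 2) * zetaPFn p μ t -
        powerMean (fun v => Real.exp (-v)) (heatFn p μ) (t ^ p) =
      (∫ l in Ioc 0 1, l ^ (-((p + 1 / Real.log t) / p)) * heatFn p μ l) / (p * Real.log t) := by
  have ht_one : 1 < t := (Real.one_lt_exp_iff.2 one_pos).trans ht
  have hlog : 0 < Real.log t := Real.log_pos ht_one
  have hz : p < p + 1 / Real.log t := lt_add_of_pos_right p (one_div_pos.2 hlog)
  have hμ_int := integrableOn_rpow_of_le hp hz hK hμ hμ_pos hμ_le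
  have hG_int := integrableOn_rpow_mul_heatFn hp (hp.trans hz) hμ hμ_pos hμ_int
  have hlog_rpow : Real.log (t ^ p) = p * Real.log t := Real.log_rpow (zero_lt_one.trans ht_one) p
  have hexponent : (p + 1 / Real.log t) / p = 1 + 1 / Real.log (t ^ p) := by
    rw [hlog_rpow]
    field_simp
  have hzeta : ∫ s in Ioi 0, μ s ^ (p + 1 / Real.log t) = Real.log t * zetaPFn p μ t := by
    rw [zetaPFn, if_pos ht, mul_div_cancel₀ _ hlog.ne']
  have hmellin := integral_rpow_mul_heatFn hp (hp.trans hz) hμ hμ_pos hμ_int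
  rw [hzeta, ← Ioc_union_Ioi_eq_Ioi zero_le_one,
    setIntegral_union Ioc_disjoint_Ioi_same measurableSet_Ioi
      (hG_int.mono_set Ioc_subset_Ioi_self) (hG_int.mono_set (Ioi_subset_Ioi zero_le_one))]
    at hmellin
  have htail : ∫ l in Ioi 1, l ^ (-((p + 1 / Real.log t) / p)) * heatFn p μ l =
      p * Real.log t * powerMean (fun v => Real.exp (-v)) (heatFn p μ) (t ^ p) := by
    rw [hexponent, integral_Ioi_one_rpow_mul_eq_log_mul_powerMean (Real.one_lt_rpow ht_one hp),
      hlog_rpow]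
  rw [htail] at hmellin
  rw [eq_div_iff (mul_pos hp hlog).ne']
  linear_combination -hmellin

lemma tendsto_half_Gamma_mul_zetaPFn_sub_powerMean (hp : 0 < p) (hK : 0 < K)
    (hμ : AEMeasurable μ (volume.restrict (Ioi 0))) (hμ_pos : ∀ s, 0 < s → 0 < μ s)
    (hμ_le : ∀ s, 0 < s → μ s ≤ K * (1 + s) ^ (-(1 / p))) :
    Tendsto (fun t => 1 / 2 * Real.Gamma ((p + 1 / Real.log t) / 2) * zetaPFn p μ t -
      powerMean (fun v => Real.exp (-v)) (heatFn p μ) (t ^ p)) atTop (𝓝 0) := by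
  obtain ⟨C, hC⟩ := exists_abs_integral_Ioc_rpow_mul_heatFn_le hp hK hμ hμ_pos hμ_le
  have hlog : Tendsto (fun t => p * Real.log t) atTop atTop :=
    Real.tendsto_log_atTop.const_mul_atTop hp
  refine squeeze_zero_norm' ?_ (hlog.const_div_atTop C)
  filter_upwards [eventually_gt_atTop (Real.exp 1), hlog.eventually_ge_atTop 1] with t ht htp
  have hlog_pos : 0 < Real.log t := Real.log_pos ((Real.one_lt_exp_iff.2 one_pos).trans ht)
  have hz : p + 1 / Real.log t ≤ 2 * p := by
    rw [two_mul, add_le_add_iff_left, div_le_iff₀ hlog_pos]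
    exact htp
  rw [half_Gamma_mul_zetaPFn_sub_powerMean_eq hp hK hμ hμ_pos hμ_le ht, Real.norm_eq_abs, abs_div,
    abs_of_pos (mul_pos hp hlog_pos)]
  gcongr
  exact hC _ hz

lemma tendsto_Gamma_add_one_div_log (hp : 0 < p) :
    Tendsto (fun t => Real.Gamma ((p + 1 / Real.log t) / 2)) atTop (𝓝 (Real.Gamma (p / 2))) := by
  have hexponent : Tendsto (fun t => (p + 1 / Real.log t) / 2) atTop (𝓝 (p / 2)) := by
    simpa only [add_zero] using
      ((Real.tendsto_log_atTop.const_div_atTop 1).const_add p).div_const 2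
  have hΓ : ContinuousAt Real.Gamma (p / 2) :=
    (Real.differentiableAt_Gamma fun n =>
      ((neg_nonpos.2 n.cast_nonneg).trans_lt (half_pos hp)).ne').continuousAt
  exact hΓ.tendsto.comp hexponent

theorem tendsto_zetaPFn_sub_powerMean_heatFn (hp : 0 < p) (hK : 0 < K)
    (hμ : AEMeasurable μ (volume.restrict (Ioi 0))) (hμ_pos : ∀ s, 0 < s → 0 < μ s)
    (hμ_le : ∀ s, 0 < s → μ s ≤ K * (1 + s) ^ (-(1 / p))) :
    Tendsto (fun t => 1 / 2 * Real.Gamma (p / 2) * zetaPFn p μ t -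
      powerMean (fun v => Real.exp (-v)) (heatFn p μ) (t ^ p)) atTop (𝓝 0) := by
  obtain ⟨C, hC⟩ := bddFun_zetaPFn hp hK.le hμ_pos hμ_le
  have hΓ : Tendsto (fun t => 1 / 2 * (Real.Gamma (p / 2) -
      Real.Gamma ((p + 1 / Real.log t) / 2)) * zetaPFn p μ t) atTop (𝓝 0) := by
    refine Tendsto.zero_mul_isBoundedUnder_le ?_ (isBoundedUnder_of ⟨C, hC⟩)
    simpa only [sub_self, mul_zero] using
      ((tendsto_Gamma_add_one_div_log hp).const_sub (Real.Gamma (p / 2))).const_mul (1 / 2)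
  have hsum := hΓ.add (tendsto_half_Gamma_mul_zetaPFn_sub_powerMean hp hK hμ hμ_pos hμ_le)
  rw [add_zero] at hsum
  refine hsum.congr fun t => ?_
  ring

end AbelMean

theorem heat_semigroup_formula_general {p K : ℝ} (hp : 0 < p) {μ : ℝ → ℝ}
    (hμ : AEMeasurable μ (volume.restrict (Ioi 0))) (hμ_pos : ∀ s, 0 < s → 0 < μ s)
    (hμ_le : ∀ s, 0 < s → μ s ≤ K * (1 + s) ^ (-(1 / p))) {ω : (ℝ → ℝ) →ₗ[ℝ] ℝ}
    (hω : IsExtendedLimit ω) (hpow : IsPowerInvariant ω) (hM : IsLogCesaroInvariant ω) :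
    BddFun (heatFn p μ) ∧ BddFun (zetaPFn p μ) ∧
      ω (heatFn p μ) = 1 / 2 * Real.Gamma (p / 2) * ω (zetaPFn p μ) := by
  have hK : 0 < K := by
    refine pos_of_mul_pos_left ((hμ_pos 1 one_pos).trans_le (hμ_le 1 one_pos)) ?_
    positivity
  have hG := bddFun_heatFn hp hK hμ_pos hμ_le
  have hZ := bddFun_zetaPFn hp hK.le hμ_pos hμ_le
  refine ⟨hG, hZ, ?_⟩
  set A := powerMean (fun v => Real.exp (-v)) (heatFn p μ) with hA
  have hφ : Continuous fun v : ℝ => Real.exp (-v) := by fun_prop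
  have hA_meas : Measurable A :=
    measurable_setIntegral_mul_comp_rpow hφ.measurable (measurable_heatFn hμ) _
  have hA_bdd : BddFun A := bddFun_powerMean (integrableOn_exp_neg_Ioi 0) hG
  symm
  calc 1 / 2 * Real.Gamma (p / 2) * ω (zetaPFn p μ)
      = ω ((1 / 2 * Real.Gamma (p / 2)) • zetaPFn p μ) := (map_smul ω _ _).symm
    _ = ω (fun t => A (t ^ p)) :=
        hω.apply_eq_of_tendsto_sub ((measurable_zetaPFn hμ).const_smul _) (hZ.const_smul _)
          (hA_meas.comp (measurable_id.pow_const p)) (hA_bdd.comp _)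
          (tendsto_zetaPFn_sub_powerMean_heatFn hp hK hμ hμ_pos hμ_le)
    _ = ω A := hpow A hA_meas hA_bdd p hp
    _ = ω (heatFn p μ) := by
        rw [hA, hω.apply_powerMean hpow hM hφ (integrableOn_exp_neg_Ioi 0) (measurable_heatFn hμ)
          hG, integral_exp_neg_Ioi_zero, one_mul]

/-- **The heat semigroup formula (Proposition 11.2).** Let `p ≥ 1`, let
`μ : [0,∞) → (0,∞)` be nonincreasing with `μ(s) ≤ K(1+s)^{−1/p}` (the singular value
function of `T ∈ L^{(p,∞)}`, `T > 0`), and let `ω` be a positive linear functional on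
`L∞((0,∞))` lying between the essential liminf and limsup at `+∞`, invariant under all
dilations `D_c`, all power maps `P^a` and the logarithmic Cesàro operator `M`.  Then
`G(λ) = (1/λ)∫₀^∞ e^{−λ^{−2/p} μ(s)^{−2}} ds` and `Z(t) = (1/log t)∫₀^∞ μ(s)^{p+1/log t} ds`
are bounded and `ω(G) = (1/2)·Γ(p/2)·ω(Z)`. -/
theorem heat_semigroup_formula (p : ℝ) (hp : 1 ≤ p) (K : ℝ) (hK : 0 < K)
    (μ : ℝ → ℝ) (hμpos : ∀ s : ℝ, 0 ≤ s → 0 < μ s)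
    (hmono : AntitoneOn μ (Set.Ici 0))
    (hμbd : ∀ s : ℝ, 0 ≤ s → μ s ≤ K * (1 + s) ^ (-(1 / p)))
    (ω : (ℝ → ℝ) →ₗ[ℝ] ℝ)
    -- ω is positive
    (hpos : ∀ f : ℝ → ℝ, Measurable f → BddFun f →
      (∀ᵐ x ∂((volume : Measure ℝ).restrict (Set.Ioi 0)), 0 ≤ f x) → 0 ≤ ω f)
    -- ω lies between the essential liminf and limsup at +∞
    (hsandwich : ∀ f : ℝ → ℝ, Measurable f → BddFun f →
      liminf f (atTop ⊓ ae ((volume : Measure ℝ).restrict (Set.Ioi 0))) ≤ ω f ∧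
        ω f ≤ limsup f (atTop ⊓ ae ((volume : Measure ℝ).restrict (Set.Ioi 0))))
    -- ω is dilation invariant: ω ∘ D_c = ω for all c > 0
    (hdil : ∀ f : ℝ → ℝ, Measurable f → BddFun f →
      ∀ c : ℝ, 0 < c → ω (fun t => f (t / c)) = ω f)
    -- ω is power invariant: ω ∘ P^a = ω for all a > 0
    (hpow : ∀ f : ℝ → ℝ, Measurable f → BddFun f →
      ∀ a : ℝ, 0 < a → ω (fun t => f (t ^ a)) = ω f)
    -- ω is M-invariant
    (hM : ∀ f : ℝ → ℝ, Measurable f → BddFun f → ω (Mop f) = ω f) :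
    BddFun (heatFn p μ) ∧ BddFun (zetaPFn p μ) ∧
      ω (heatFn p μ) = (1 / 2) * Real.Gamma (p / 2) * ω (zetaPFn p μ) := by
  exact heat_semigroup_formula_general (zero_lt_one.trans_le hp)
    (aemeasurable_restrict_of_antitoneOn measurableSet_Ioi (hmono.mono Ioi_subset_Ici_self))
    (fun s hs => hμpos s hs.le) (fun s hs => hμbd s hs.le) hsandwich hpow hM
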